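/- arXiv:2304.13228 — 2 statements merged into one kernel-verified Lean document; each statement's English description precedes it below -/
import Mathlib

section
/- Let G = (V,E) be a finite simple graph, and let C ⊆ E be a triangle-free 2-edge-cover of G. Then there exists a triangle-free 2-matching M ⊆ E of G with |M| ≥ 2|V| − |C|. -/
namespace ECSS

variable {V : Type*}

/-- The spanning subgraph of the vertex type `V` determined by an edge set `F`,
viewed as a simple graph on `V`. -/
def graphOf (F : Finset (Sym2 V)) : SimpleGraph V :=
  SimpleGraph.fromEdgeSet (F : Set (Sym2 V))

/-- `d_F(v)`: the number of edges of the edge set `F` incident to the vertex `v`. -/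
noncomputable def degIn (F : Finset (Sym2 V)) (v : V) : ℕ :=
  {e ∈ (F : Set (Sym2 V)) | v ∈ e}.ncard

/-- `F` is a 2-matching: every vertex is incident to at most 2 edges of `F`. -/
def IsTwoMatching (F : Finset (Sym2 V)) : Prop :=
  ∀ v : V, degIn F v ≤ 2

/-- `F` is a 2-edge-cover: every vertex is incident to at least 2 edges of `F`. -/
def IsTwoEdgeCover (F : Finset (Sym2 V)) : Prop :=
  ∀ v : V, 2 ≤ degIn F v

/-- The vertices `u, v, w` form a triangle 2EC component of the edge set `F`:
they are pairwise distinct, the three edges joining them all belong to `F`, and no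
other edge of `F` is incident to any of them (so `{u, v, w}` is a connected
component of `(V, F)` which is a cycle of length 3). -/
def IsTriangleComponent (F : Finset (Sym2 V)) (u v w : V) : Prop :=
  u ≠ v ∧ u ≠ w ∧ v ≠ w ∧
  s(u, v) ∈ F ∧ s(u, w) ∈ F ∧ s(v, w) ∈ F ∧
  ∀ e ∈ F, (u ∈ e ∨ v ∈ e ∨ w ∈ e) → e = s(u, v) ∨ e = s(u, w) ∨ e = s(v, w)

/-- An edge set `F` is triangle-free if it has no triangle 2EC component. -/
def TriangleFree (F : Finset (Sym2 V)) : Prop :=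
  ¬ ∃ u v w : V, IsTriangleComponent F u v w

/-- A graph is 2-edge-connected if it has at least two vertices and remains
connected after deleting any single edge. -/
def TwoEdgeConnected {α : Type*} (G : SimpleGraph α) : Prop :=
  2 ≤ Nat.card α ∧ G.Connected ∧ ∀ e ∈ G.edgeSet, (G.deleteEdges {e}).Connected

/-- A graph is a cycle if it is connected and every vertex has degree exactly 2. -/
def IsCycleGraph {α : Type*} (G : SimpleGraph α) : Prop :=
  G.Connected ∧ ∀ v : α, (G.neighborSet v).ncard = 2

/-!
Delete edges of `C` one at a time, each with an endpoint of degree greater than 2, keeping the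
edge set triangle-free, until no such vertex remains. Every deletion lowers `∑ v, (d(v) - 2)⁺`,
so there are at most `∑ v, (d_C(v) - 2) ≤ 2|C| - 2|V|` deletions.

If deleting an edge `e` at a vertex of degree greater than 2 creates a triangle component `u v w`,
then `e` meets it, say in `u`, and `u` has degree 3. Delete `uv` instead: `v` becomes a leaf joined
to `u` by the path `u w v`, so neither end of `uv` lies on a triangle component.
-/

section Degree

variable [DecidableEq V] {F : Finset (Sym2 V)} {e : Sym2 V} {v : V}

lemma degIn_eq_card_filter (F : Finset (Sym2 V)) (v : V) :
    degIn F v = {e ∈ F | v ∈ e}.card := by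
  rw [degIn, ← Set.ncard_coe_finset, Finset.coe_filter]
  rfl

lemma degIn_erase_add_one (he : e ∈ F) (hv : v ∈ e) : degIn (F.erase e) v + 1 = degIn F v := by
  rw [degIn_eq_card_filter, degIn_eq_card_filter, Finset.filter_erase]
  exact Finset.card_erase_add_one (Finset.mem_filter.2 ⟨he, hv⟩)

lemma degIn_erase_of_notMem (hv : v ∉ e) : degIn (F.erase e) v = degIn F v := by
  have he : e ∉ {f ∈ F | v ∈ f} := fun he => hv (Finset.mem_filter.1 he).2
  rw [degIn_eq_card_filter, degIn_eq_card_filter, Finset.filter_erase,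
    Finset.erase_eq_of_notMem he]

lemma degIn_erase_le : degIn (F.erase e) v ≤ degIn F v := by
  rw [degIn_eq_card_filter, degIn_eq_card_filter]
  exact Finset.card_le_card (Finset.filter_subset_filter _ (Finset.erase_subset _ _))

end Degree

lemma sum_degIn_le [Fintype V] (F : Finset (Sym2 V)) : ∑ v, degIn F v ≤ 2 * F.card := by
  classical
  calc ∑ v, degIn F v
      = ∑ v, {e ∈ F | v ∈ e}.card := Finset.sum_congr rfl fun v _ => degIn_eq_card_filter F v
    _ = ∑ e ∈ F, (Finset.univ.filter (· ∈ e)).card :=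
        Finset.sum_card_bipartiteAbove_eq_sum_card_bipartiteBelow fun v e => v ∈ e
    _ ≤ ∑ _e ∈ F, 2 := Finset.sum_le_sum fun e _ => by
        rw [show Finset.univ.filter (· ∈ e) = e.toFinset by ext; simp, Sym2.card_toFinset]
        split_ifs <;> decide
    _ = 2 * F.card := by rw [Finset.sum_const, smul_eq_mul, mul_comm]

section Excess

variable [Fintype V] {F : Finset (Sym2 V)}

/-- The total amount by which the degrees of `F` exceed 2. The subtraction is truncated, so
vertices of degree at most 2 contribute 0 and 2-matchings are the edge sets of excess 0. -/
noncomputable def excess (F : Finset (Sym2 V)) : ℕ :=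
  ∑ v, (degIn F v - 2)

lemma excess_erase_lt [DecidableEq V] {e : Sym2 V} {x : V} (he : e ∈ F) (hx : x ∈ e)
    (hdeg : 2 < degIn F x) : excess (F.erase e) < excess F := by
  refine Finset.sum_lt_sum (fun v _ => Nat.sub_le_sub_right degIn_erase_le 2)
    ⟨x, Finset.mem_univ x, ?_⟩
  have := degIn_erase_add_one he hx
  omega

lemma IsTwoEdgeCover.excess_add_two_mul_card (hF : IsTwoEdgeCover F) :
    excess F + 2 * Fintype.card V = ∑ v, degIn F v := by
  calc excess F + 2 * Fintype.card V
      = ∑ v, (degIn F v - 2 + 2) := by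
        rw [Finset.sum_add_distrib, Finset.sum_const, Finset.card_univ, smul_eq_mul, mul_comm 2,
          excess]
    _ = ∑ v, degIn F v := Finset.sum_congr rfl fun v _ => Nat.sub_add_cancel (hF v)

end Excess

section Triangle

variable {F : Finset (Sym2 V)} {u v w x y : V}

/-- The vertex `x` lies on a triangle 2EC component of `F`. -/
def OnTriangleComponent (F : Finset (Sym2 V)) (x : V) : Prop :=
  ∃ v w, IsTriangleComponent F x v w

lemma IsTriangleComponent.rotate (h : IsTriangleComponent F u v w) :
    IsTriangleComponent F v w u := by
  obtain ⟨huv, huw, hvw, muv, muw, mvw, honly⟩ := h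
  refine ⟨hvw, huv.symm, huw.symm, mvw, Sym2.eq_swap ▸ muv, Sym2.eq_swap ▸ muw, fun e he hmem => ?_⟩
  rw [Sym2.eq_swap (a := v) (b := u), Sym2.eq_swap (a := w) (b := u)]
  have := honly e he
  tauto

lemma OnTriangleComponent.degIn_eq_two (h : OnTriangleComponent F x) : degIn F x = 2 := by
  classical
  obtain ⟨v, w, hxv, hxw, hvw, mxv, mxw, -, honly⟩ := h
  have hedges : {e ∈ F | x ∈ e} = {s(x, v), s(x, w)} := by
    ext e
    simp only [Finset.mem_filter, Finset.mem_insert, Finset.mem_singleton]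
    constructor
    · rintro ⟨he, hxe⟩
      rcases honly e he (Or.inl hxe) with rfl | rfl | rfl
      · exact Or.inl rfl
      · exact Or.inr rfl
      · simp [hxv, hxw] at hxe
    · rintro (rfl | rfl)
      · exact ⟨mxv, Sym2.mem_mk_left x v⟩
      · exact ⟨mxw, Sym2.mem_mk_left x w⟩
  rw [degIn_eq_card_filter, hedges, Finset.card_pair fun h => hvw (Sym2.congr_right.1 h)]

lemma OnTriangleComponent.of_edge_mem (h : OnTriangleComponent F x) (hxy : s(x, y) ∈ F) :
    OnTriangleComponent F y := by
  obtain ⟨v, w, h⟩ := h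
  obtain ⟨hxv, hxw, -, -, -, -, honly⟩ := id h
  rcases honly _ hxy (Or.inl (Sym2.mem_mk_left x y)) with hy | hy | hy
  · exact Sym2.congr_right.1 hy ▸ ⟨w, x, h.rotate⟩
  · exact Sym2.congr_right.1 hy ▸ ⟨x, v, h.rotate.rotate⟩
  · rcases Sym2.mem_iff.1 (hy ▸ Sym2.mem_mk_left x y) with rfl | rfl
    · exact absurd rfl hxv
    · exact absurd rfl hxw

variable [DecidableEq V] {e : Sym2 V}

lemma IsTriangleComponent.of_erase (h : IsTriangleComponent (F.erase e) u v w)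
    (hu : u ∉ e) (hv : v ∉ e) (hw : w ∉ e) : IsTriangleComponent F u v w := by
  obtain ⟨huv, huw, hvw, muv, muw, mvw, honly⟩ := h
  refine ⟨huv, huw, hvw, Finset.mem_of_mem_erase muv, Finset.mem_of_mem_erase muw,
    Finset.mem_of_mem_erase mvw, fun f hf hmem => honly f (Finset.mem_erase.2 ⟨?_, hf⟩) hmem⟩
  rintro rfl
  tauto

lemma TriangleFree.exists_mem_onTriangleComponent_erase (hF : TriangleFree F)
    (he : ¬ TriangleFree (F.erase e)) : ∃ u ∈ e, OnTriangleComponent (F.erase e) u := by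
  obtain ⟨u, v, w, h⟩ := not_not.1 he
  by_contra! hout
  exact hF ⟨u, v, w, h.of_erase (fun hu => hout u hu ⟨v, w, h⟩)
    (fun hv => hout v hv ⟨w, u, h.rotate⟩) (fun hw => hout w hw ⟨u, v, h.rotate.rotate⟩)⟩

lemma TriangleFree.erase_of_isTriangleComponent_erase (hF : TriangleFree F) (hu : u ∈ e)
    (h : IsTriangleComponent (F.erase e) u v w) : TriangleFree (F.erase s(u, v)) := by
  obtain ⟨huv, huw, hvw, muv, muw, mvw, -⟩ := id h
  have hve : v ∉ e := fun hv =>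
    Finset.ne_of_mem_erase muv ((Sym2.mem_and_mem_iff huv).1 ⟨hu, hv⟩).symm
  have hdeg : degIn (F.erase s(u, v)) v + 1 = 2 := by
    rw [degIn_erase_add_one (Finset.mem_of_mem_erase muv) (Sym2.mem_mk_right u v),
      ← degIn_erase_of_notMem hve, OnTriangleComponent.degIn_eq_two ⟨w, u, h.rotate⟩]
  have muw' : s(u, w) ∈ F.erase s(u, v) :=
    Finset.mem_erase.2 ⟨fun h => hvw (Sym2.congr_right.1 h).symm, Finset.mem_of_mem_erase muw⟩
  have mwv' : s(w, v) ∈ F.erase s(u, v) :=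
    Finset.mem_erase.2 ⟨fun h => huw (Sym2.congr_left.1 h).symm,
      Sym2.eq_swap ▸ Finset.mem_of_mem_erase mvw⟩
  by_contra hnot
  obtain ⟨x, hx, hcomp⟩ := hF.exists_mem_onTriangleComponent_erase hnot
  have hv : OnTriangleComponent (F.erase s(u, v)) v := by
    rcases Sym2.mem_iff.1 hx with rfl | rfl
    · exact (hcomp.of_edge_mem muw').of_edge_mem mwv'
    · exact hcomp
  have := hv.degIn_eq_two
  omega

lemma TriangleFree.exists_triangleFree_erase (hF : TriangleFree F) (hx : 2 < degIn F x) :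
    ∃ e ∈ F, ∃ u ∈ e, 2 < degIn F u ∧ TriangleFree (F.erase e) := by
  obtain ⟨e, he⟩ : {e ∈ F | x ∈ e}.Nonempty := by
    rw [← Finset.card_pos, ← degIn_eq_card_filter]
    omega
  obtain ⟨heF, hxe⟩ := Finset.mem_filter.1 he
  by_cases hfree : TriangleFree (F.erase e)
  · exact ⟨e, heF, x, hxe, hx, hfree⟩
  obtain ⟨u, hu, hcomp⟩ := hF.exists_mem_onTriangleComponent_erase hfree
  have hdeg : 2 < degIn F u := by
    rw [← degIn_erase_add_one heF hu, hcomp.degIn_eq_two]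
    decide
  obtain ⟨v, w, h⟩ := hcomp
  obtain ⟨-, -, -, muv, -⟩ := id h
  exact ⟨s(u, v), Finset.mem_of_mem_erase muv, u, Sym2.mem_mk_left u v, hdeg,
    hF.erase_of_isTriangleComponent_erase hu h⟩

end Triangle

lemma TriangleFree.exists_subset_isTwoMatching [Fintype V] {F : Finset (Sym2 V)}
    (hF : TriangleFree F) :
    ∃ M ⊆ F, IsTwoMatching M ∧ TriangleFree M ∧ F.card ≤ M.card + excess F := by
  classical
  induction F using Finset.strongInduction with
  | H F ih =>
    by_cases hmatch : IsTwoMatching F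
    · exact ⟨F, subset_rfl, hmatch, hF, Nat.le_add_right _ _⟩
    obtain ⟨x, hx⟩ : ∃ x, 2 < degIn F x := by
      simpa only [IsTwoMatching, not_forall, not_le] using hmatch
    obtain ⟨e, he, u, hu, hdeg, hfree⟩ := hF.exists_triangleFree_erase hx
    obtain ⟨M, hMF, hM, hMfree, hcard⟩ := ih _ (Finset.erase_ssubset he) hfree
    refine ⟨M, hMF.trans (Finset.erase_subset e F), hM, hMfree, ?_⟩
    have hcardErase := Finset.card_erase_add_one he
    have hexcess := excess_erase_lt he hu hdeg
    omega

theorem triangleFree_twoMatching_of_twoEdgeCover_general [Fintype V] (C : Finset (Sym2 V))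
    (hC2 : IsTwoEdgeCover C) (hCtf : TriangleFree C) :
    ∃ M ⊆ C, IsTwoMatching M ∧ TriangleFree M ∧ 2 * Fintype.card V ≤ M.card + C.card := by
  obtain ⟨M, hMC, hM, hMfree, hcard⟩ := hCtf.exists_subset_isTwoMatching
  have hexcess := hC2.excess_add_two_mul_card
  have hsum := sum_degIn_le C
  exact ⟨M, hMC, hM, hMfree, by omega⟩

/-- If `G` is a finite simple graph and `C ⊆ E(G)` is a
triangle-free 2-edge-cover, then `G` has a triangle-free 2-matching `M ⊆ E(G)`
with `|M| ≥ 2|V| - |C|`. -/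
theorem triangleFree_twoMatching_of_twoEdgeCover
    {V : Type*} [Fintype V] (G : SimpleGraph V)
    (C : Finset (Sym2 V)) (hCsub : (C : Set (Sym2 V)) ⊆ G.edgeSet)
    (hC2 : IsTwoEdgeCover C) (hCtf : TriangleFree C) :
    ∃ M : Finset (Sym2 V), (M : Set (Sym2 V)) ⊆ G.edgeSet ∧
      IsTwoMatching M ∧ TriangleFree M ∧
      2 * Fintype.card V - C.card ≤ M.card := by
  obtain ⟨M, hMC, hM, hMfree, hcard⟩ := triangleFree_twoMatching_of_twoEdgeCover_general C hC2 hCtf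
  exact ⟨M, fun _ he => hCsub (hMC he), hM, hMfree, Nat.sub_le_of_le_add hcard⟩

end ECSS
end

section
/- Let G = (V,E) be a finite simple graph, let F ⊆ E be a triangle-free edge set, let vw ∈ E∖F, and suppose F ∪ {vw} is not triangle-free. Then F ∪ {vw} has a triangle 2EC component T with both v ∈ V(T) and w ∈ V(T), and moreover d_F(v) = d_F(w) = 1. -/
/-!
A triangle component of `F ∪ {vw}` that avoids the edge `vw` would already be a triangle component
of `F`, so `vw` is one of its three edges. Both endpoints then have degree two in `F ∪ {vw}`, and
removing `vw` lowers each degree by one.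
-/

namespace ECSS

variable {V : Type*}

theorem degIn_insert [DecidableEq V] {F : Finset (Sym2 V)} {e : Sym2 V} {v : V}
    (he : e ∉ F) (hv : v ∈ e) : degIn (insert e F) v = degIn F v + 1 := by
  have incident_insert : {e' ∈ (↑(insert e F) : Set (Sym2 V)) | v ∈ e'} =
      insert e {e' ∈ (F : Set (Sym2 V)) | v ∈ e'} := by
    rw [Finset.coe_insert]
    exact Set.insert_inter_of_mem hv
  rw [degIn, incident_insert, Set.ncard_insert_of_notMem (fun h => he h.1)
    (F.finite_toSet.subset (Set.sep_subset _ _)), degIn]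

namespace IsTriangleComponent

variable {F : Finset (Sym2 V)} {u v w : V}

theorem swap_left (h : IsTriangleComponent F u v w) : IsTriangleComponent F v u w := by
  obtain ⟨huv, huw, hvw, euv, euw, evw, isolated⟩ := h
  rw [Sym2.eq_swap] at euv
  refine ⟨huv.symm, hvw, huw, euv, evw, euw, fun e he hmem => ?_⟩
  rw [Sym2.eq_swap (a := v) (b := u), or_comm (a := e = s(v, w))]
  exact isolated e he (or_left_comm.mp hmem)

theorem swap_right (h : IsTriangleComponent F u v w) : IsTriangleComponent F u w v := by
  obtain ⟨huv, huw, hvw, euv, euw, evw, isolated⟩ := h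
  rw [Sym2.eq_swap] at evw
  refine ⟨huw, huv, hvw.symm, euw, euv, evw, fun e he hmem => ?_⟩
  rw [Sym2.eq_swap (a := w) (b := v), or_left_comm]
  exact isolated e he (hmem.imp_right Or.symm)

theorem degIn_left (h : IsTriangleComponent F u v w) : degIn F u = 2 := by
  obtain ⟨huv, huw, hvw, euv, euw, -, isolated⟩ := h
  have incident_eq : {e ∈ (F : Set (Sym2 V)) | u ∈ e} = {s(u, v), s(u, w)} := by
    ext e
    constructor
    · rintro ⟨he, hu⟩
      rcases isolated e he (Or.inl hu) with rfl | rfl | rfl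
      · exact Or.inl rfl
      · exact Or.inr rfl
      · exact absurd (Sym2.mem_iff.mp hu) (not_or_intro huv huw)
    · rintro (rfl | rfl)
      · exact ⟨euv, Sym2.mem_mk_left u v⟩
      · exact ⟨euw, Sym2.mem_mk_left u w⟩
  rw [degIn, incident_eq, Set.ncard_pair (fun h => hvw (Sym2.congr_right.mp h))]

theorem degIn_eq_two {x : V} (h : IsTriangleComponent F u v w)
    (hx : x ∈ ({u, v, w} : Set V)) : degIn F x = 2 := by
  rcases hx with rfl | rfl | rfl
  · exact h.degIn_left
  · exact h.swap_left.degIn_left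
  · exact h.swap_right.swap_left.degIn_left

theorem of_subset {F' : Finset (Sym2 V)} (h : IsTriangleComponent F' u v w) (hF : F ⊆ F')
    (huv : s(u, v) ∈ F) (huw : s(u, w) ∈ F) (hvw : s(v, w) ∈ F) :
    IsTriangleComponent F u v w := by
  obtain ⟨u_ne_v, u_ne_w, v_ne_w, -, -, -, isolated⟩ := h
  exact ⟨u_ne_v, u_ne_w, v_ne_w, huv, huw, hvw, fun e he => isolated e (hF he)⟩

theorem eq_edge_of_insert [DecidableEq V] {e : Sym2 V}
    (h : IsTriangleComponent (insert e F) u v w) (hF : TriangleFree F) :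
    e = s(u, v) ∨ e = s(u, w) ∨ e = s(v, w) := by
  by_contra! ⟨huv, huw, hvw⟩
  have ⟨_, _, _, euv, euw, evw, _⟩ := h
  exact hF ⟨u, v, w, h.of_subset (Finset.subset_insert e F)
    (Finset.mem_of_mem_insert_of_ne euv huv.symm)
    (Finset.mem_of_mem_insert_of_ne euw huw.symm)
    (Finset.mem_of_mem_insert_of_ne evw hvw.symm)⟩

theorem mem_vertices_of_insert [DecidableEq V] {e : Sym2 V} {x : V}
    (h : IsTriangleComponent (insert e F) u v w) (hF : TriangleFree F) (hx : x ∈ e) :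
    x ∈ ({u, v, w} : Set V) := by
  simp only [Set.mem_insert_iff, Set.mem_singleton_iff]
  rcases h.eq_edge_of_insert hF with rfl | rfl | rfl <;> rw [Sym2.mem_iff] at hx <;> tauto

end IsTriangleComponent

/-- Let `F ⊆ E(G)` be a triangle-free edge set, let
`vw ∈ E(G) \ F`, and suppose `F ∪ {vw}` is not triangle-free. Then `F ∪ {vw}` has
a triangle 2EC component containing both `v` and `w`, and moreover
`d_F(v) = d_F(w) = 1`. -/
theorem triangle_component_after_addition
    {V : Type*} [DecidableEq V] (G : SimpleGraph V)
    (F : Finset (Sym2 V)) (hFsub : (F : Set (Sym2 V)) ⊆ G.edgeSet)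
    (hFtf : TriangleFree F)
    (v w : V) (hadj : G.Adj v w) (hvw : s(v, w) ∉ F)
    (hnt : ¬ TriangleFree (insert s(v, w) F)) :
    (∃ a b c : V, IsTriangleComponent (insert s(v, w) F) a b c ∧
      v ∈ ({a, b, c} : Set V) ∧ w ∈ ({a, b, c} : Set V)) ∧
    degIn F v = 1 ∧ degIn F w = 1 := by
  obtain ⟨a, b, c, hT⟩ := not_not.mp hnt
  have hv : v ∈ ({a, b, c} : Set V) := hT.mem_vertices_of_insert hFtf (Sym2.mem_mk_left v w)
  have hw : w ∈ ({a, b, c} : Set V) := hT.mem_vertices_of_insert hFtf (Sym2.mem_mk_right v w)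
  have degree_of_mem {x : V} (hx : x ∈ s(v, w)) (hxT : x ∈ ({a, b, c} : Set V)) :
      degIn F x = 1 := by
    have hdeg := hT.degIn_eq_two hxT
    rw [degIn_insert hvw hx] at hdeg
    exact Nat.succ_injective hdeg
  exact ⟨⟨a, b, c, hT, hv, hw⟩, degree_of_mem (Sym2.mem_mk_left v w) hv,
    degree_of_mem (Sym2.mem_mk_right v w) hw⟩

end ECSS
end
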